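/- arXiv:1712.02416 — 2 statements merged into one kernel-verified Lean document; each statement's English description precedes it below -/
import Mathlib

section
/- For $n = 3$ and independent indeterminates $x_1,x_2,x_3,y_1,y_2,y_3,\alpha$: $\det\left( \frac{\alpha}{(x_i-y_j+\alpha)(x_i-y_j)} \right)_{1\le i,j\le 3} = \alpha^{9} \frac{\prod_{1\le i<j\le 3}(x_i-x_j)(y_j-y_i)}{\prod_{i,j}(x_i-y_j)(x_i-y_j+\alpha)} \cdot S$, where $S$ is the sum of the seven terms: $(x_1-y_2)(x_1-y_3)(x_2-y_1)(x_2-y_3)(x_3-y_1)(x_3-y_2)\alpha^{-6}$; $(x_1-y_2)(x_1-y_3)(x_2-y_1)(x_2-y_2+\alpha)(x_3-y_1)(x_3-y_3+\alpha)\alpha^{-6}$; $(x_1-y_1+\alpha)(x_1-y_3)(x_2-y_2+\alpha)(x_2-y_3)(x_3-y_1)(x_3-y_2)\alpha^{-6}$; $(x_1-y_1+\alpha)(x_1-y_3)(x_2-y_1+\alpha)(x_2-y_2)(x_3-y_2+\alpha)(x_3-y_3+\alpha)\alpha^{-6}$; $(x_1-y_1+\alpha)(x_1-y_2+\alpha)(x_2-y_1+\alpha)(x_2-y_3+\alpha)(x_3-y_2+\alpha)(x_3-y_3+\alpha)\alpha^{-6}$;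 $(x_1-y_1+\alpha)(x_1-y_2+\alpha)(x_2-y_2)(x_2-y_3+\alpha)(x_3-y_1)(x_3-y_3+\alpha)\alpha^{-6}$; $(x_1-y_1+\alpha)(x_1-y_3)(x_3-y_1)(x_3-y_3+\alpha)\alpha^{-4}$. -/
open Finset

/-!
Izergin's interpolation argument. As a function of `x₀`, the determinant with its `x₀`-denominators
cleared is a polynomial of degree at most `2n` when there are `n + 1` variables. It vanishes when
`x₀` equals another `xᵢ`, because two rows then coincide, and at `x₀ = yⱼ` a single cofactor
survives, a determinant of size `n`. These are `2n + 1` points, so a formula of the form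
prefactor times `Z` holds in size `n + 1` as soon as it holds in size `n`, `Z` has degree at most
`n` in `x₀`, and `Z` satisfies Korepin's recursion at `x₀ = yⱼ`. The sums over alternating sign
matrices of sizes `2` and `3` satisfy this recursion.
-/

section Izergin

open Polynomial Matrix

variable {R K : Type*} [CommRing R] [Field K] {m n : ℕ}

/-- The Jack limit of Izergin's determinant, for matrices of any size. -/
def izerginDet (α : K) (x y : Fin n → K) : K :=
  det (of fun i j => α / ((x i - y j + α) * (x i - y j)))

/-- The factor `∏_{i<j} (xᵢ - xⱼ) (yⱼ - yᵢ) / ∏_{i,j} (xᵢ - yⱼ) (xᵢ - yⱼ + α)` between the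
determinant and the partition function. The sign in `-x` turns `xⱼ - xᵢ` into `xᵢ - xⱼ`, and the
numbers of `x`s and `y`s may differ so that either kind of variable can be split off alone. -/
def izerginPrefactor (α : K) (x : Fin m → K) (y : Fin n → K) : K :=
  (vandermonde (-x)).det * (vandermonde y).det / ∏ i, ∏ j, ((x i - y j) * (x i - y j + α))

theorem det_vandermonde_eq_det_succAbove (v : Fin (n + 1) → R) (j : Fin (n + 1)) :
    (vandermonde v).det =
      (-1) ^ (j : ℕ) * (∏ k, (v (j.succAbove k) - v j)) *
        (vandermonde (v ∘ j.succAbove)).det := by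
  have hperm : (vandermonde v).submatrix j.cycleRange.symm id =
      vandermonde (vecCons (v j) (v ∘ j.succAbove)) := by
    ext i k
    refine Fin.cases ?_ (fun i => ?_) i <;> simp [vandermonde_apply]
  have hcons : (vandermonde (vecCons (v j) (v ∘ j.succAbove))).det =
      (∏ k, (v (j.succAbove k) - v j)) * (vandermonde (v ∘ j.succAbove)).det := by
    rw [det_vandermonde, det_vandermonde]
    simp [Fin.prod_univ_succ, Fin.prod_Ioi_succ]
  rw [mul_assoc, ← hcons, ← hperm, det_permute, Equiv.Perm.sign_symm, Fin.sign_cycleRange]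
  simp [← mul_assoc, ← mul_pow]

theorem izerginPrefactor_vecCons (α t : K) (x : Fin m → K) (y : Fin n → K) :
    izerginPrefactor α (vecCons t x) y =
      (∏ i, (t - x i)) / (∏ j, ((t - y j) * (t - y j + α))) * izerginPrefactor α x y := by
  have htail : (-vecCons t x) ∘ Fin.succ = -x := rfl
  have hvandermonde :
      (vandermonde (-vecCons t x)).det = (∏ i, (t - x i)) * (vandermonde (-x)).det := by
    rw [det_vandermonde_eq_det_succAbove _ 0, Fin.succAbove_zero, htail]
    simp [neg_add_eq_sub]
  simp only [izerginPrefactor, hvandermonde, Fin.prod_univ_succ, cons_val_zero, cons_val_succ,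
    div_eq_mul_inv, mul_inv]
  ring

theorem izerginPrefactor_eq_succAbove (α : K) (x : Fin m → K) (y : Fin (n + 1) → K)
    (j : Fin (n + 1)) :
    izerginPrefactor α x y =
      (-1) ^ (j : ℕ) * (∏ k, (y (j.succAbove k) - y j)) /
        (∏ i, ((x i - y j) * (x i - y j + α))) * izerginPrefactor α x (y ∘ j.succAbove) := by
  simp only [izerginPrefactor, det_vandermonde_eq_det_succAbove y j,
    Fin.prod_univ_succAbove _ j, prod_mul_distrib, Function.comp_apply, div_eq_mul_inv, mul_inv]
  ring

theorem izerginPrefactor_three (α : K) (x y : Fin 3 → K) :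
    izerginPrefactor α x y =
      (x 0 - x 1) * (y 1 - y 0) * ((x 0 - x 2) * (y 2 - y 0)) * ((x 1 - x 2) * (y 2 - y 1)) /
        ∏ i, ∏ j, ((x i - y j) * (x i - y j + α)) := by
  simp only [izerginPrefactor, det_fin_three, vandermonde_apply, Pi.neg_apply, Fin.val_zero,
    Fin.val_one, Fin.val_two]
  congr 1
  ring

theorem izerginDet_eq_zero_of_not_injective_left (α : K) {x : Fin n → K} (y : Fin n → K)
    (hx : ¬ Function.Injective x) : izerginDet α x y = 0 := by
  obtain ⟨i, k, hik, hne⟩ := Function.not_injective_iff.mp hx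
  exact det_zero_of_row_eq hne (by ext j; simp [hik])

theorem izerginDet_eq_zero_of_not_injective_right (α : K) (x : Fin n → K) {y : Fin n → K}
    (hy : ¬ Function.Injective y) : izerginDet α x y = 0 := by
  obtain ⟨j, k, hjk, hne⟩ := Function.not_injective_iff.mp hy
  exact det_zero_of_column_eq hne fun i => by simp [hjk]

theorem izerginPrefactor_eq_zero_of_not_injective_left (α : K) {x : Fin m → K} (y : Fin n → K)
    (hx : ¬ Function.Injective x) : izerginPrefactor α x y = 0 := by
  have hdet : (vandermonde (-x)).det = 0 :=
    not_ne_iff.mp fun h => hx fun i j hij => det_vandermonde_ne_zero_iff.mp h (by simp [hij])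
  simp [izerginPrefactor, hdet]

theorem izerginPrefactor_eq_zero_of_not_injective_right (α : K) (x : Fin m → K) {y : Fin n → K}
    (hy : ¬ Function.Injective y) : izerginPrefactor α x y = 0 := by
  have hdet : (vandermonde y).det = 0 :=
    not_ne_iff.mp fun h => hy (det_vandermonde_ne_zero_iff.mp h)
  simp [izerginPrefactor, hdet]

/-- The cofactor expansion of `izerginDet α (vecCons t x) y` along its first row, with the
denominators of that row cleared, as a polynomial in `t`. -/
noncomputable def izerginCofactorPoly (α : K) (x : Fin n → K) (y : Fin (n + 1) → K) : K[X] :=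
  ∑ j : Fin (n + 1), C ((-1) ^ (j : ℕ) * α * izerginDet α x (y ∘ j.succAbove)) *
    ∏ k, ((X - C (y (j.succAbove k))) * (X - C (y (j.succAbove k)) + C α))

theorem natDegree_izerginCofactorPoly_le (α : K) (x : Fin n → K) (y : Fin (n + 1) → K) :
    (izerginCofactorPoly α x y).natDegree ≤ 2 * n := by
  refine natDegree_sum_le_of_forall_le _ _ fun j _ =>
    (natDegree_C_mul_le _ _).trans ((natDegree_prod_le _ _).trans ?_)
  have hfactor (c : K) : ((X - C c) * (X - C c + C α)).natDegree ≤ 2 := by compute_degree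
  simpa [mul_comm] using sum_le_card_nsmul univ _ 2 fun k _ => hfactor (y (j.succAbove k))

theorem eval_izerginCofactorPoly_right (α : K) (x : Fin n → K) (y : Fin (n + 1) → K)
    (j : Fin (n + 1)) :
    (izerginCofactorPoly α x y).eval (y j) =
      (-1) ^ (j : ℕ) * α * izerginDet α x (y ∘ j.succAbove) *
        ∏ k, ((y j - y (j.succAbove k)) * (y j - y (j.succAbove k) + α)) := by
  rw [izerginCofactorPoly, eval_finsetSum, sum_eq_single j]
  · simp [eval_prod]
  · intro i _ hij
    obtain ⟨k, hk⟩ := Fin.exists_succAbove_eq hij.symm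
    simp [eval_prod, prod_eq_zero (mem_univ k), hk]
  · simp

theorem eval_izerginCofactorPoly (α t : K) (x : Fin n → K) (y : Fin (n + 1) → K)
    (ht : ∀ j, t - y j ≠ 0) (htα : ∀ j, t - y j + α ≠ 0) :
    (izerginCofactorPoly α x y).eval t =
      izerginDet α (vecCons t x) y * ∏ j, ((t - y j) * (t - y j + α)) := by
  rw [izerginCofactorPoly, eval_finsetSum, izerginDet, det_succ_row_zero, sum_mul]
  refine sum_congr rfl fun j _ => ?_
  have hminor : (of fun i j => α / ((vecCons t x i - y j + α) *
        (vecCons t x i - y j))).submatrix Fin.succ j.succAbove =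
      of fun i k => α / ((x i - (y ∘ j.succAbove) k + α) * (x i - (y ∘ j.succAbove) k)) := by
    ext i k
    simp
  rw [hminor, ← izerginDet, Fin.prod_univ_succAbove _ j]
  simp only [eval_mul, eval_C, eval_prod, eval_sub, eval_add, eval_X, of_apply, cons_val_zero]
  field_simp [ht j, htα j]

theorem izerginCofactorPoly_eq {α : K} {x : Fin n → K} {y : Fin (n + 1) → K}
    (hx : Function.Injective x) (hy : Function.Injective y)
    (hxy : ∀ i j, x i - y j ≠ 0) (hxyα : ∀ i j, x i - y j + α ≠ 0)
    {Z : Fin (n + 1) → K}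
    (hZ : ∀ j, izerginDet α x (y ∘ j.succAbove) =
      izerginPrefactor α x (y ∘ j.succAbove) * Z j)
    {P : K[X]} (hPdeg : P.natDegree ≤ n)
    (hP : ∀ j, P.eval (y j) =
      α * (∏ k, (y j - y (j.succAbove k) + α)) * (∏ i, (x i - y j + α)) * Z j) :
    izerginCofactorPoly α x y =
      C (izerginPrefactor α x y) * ((∏ i, (X - C (x i))) * P) := by
  have hinj : Function.Injective (Sum.elim y x) :=
    hy.sumElim hx fun j i h => hxy i j (sub_eq_zero.mpr h.symm)
  refine eq_of_natDegree_lt_card_of_eval_eq _ _ hinj ?_ ?_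
  · rintro (j | i)
    · have hflip : (∏ k, (y (j.succAbove k) - y j)) * ∏ i, (y j - x i) =
          (∏ k, (y j - y (j.succAbove k))) * ∏ i, (x i - y j) := by
        simp only [← prod_mul_distrib]
        exact prod_congr rfl fun i _ => by ring
      have hne : ∏ i, (x i - y j) ≠ 0 := prod_ne_zero_iff.mpr fun i _ => hxy i j
      have hneα : ∏ i, (x i - y j + α) ≠ 0 := prod_ne_zero_iff.mpr fun i _ => hxyα i j
      simp only [Sum.elim_inl, eval_izerginCofactorPoly_right, hZ, eval_mul, eval_C, hP,
        izerginPrefactor_eq_succAbove α x y j, eval_prod, eval_sub, eval_X, prod_mul_distrib]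
      field_simp
      linear_combination
        -(α * izerginPrefactor α x (y ∘ j.succAbove) * Z j *
          ∏ k, (y j - y (j.succAbove k) + α)) * hflip
    · have hzero : izerginDet α (vecCons (x i) x) y = 0 :=
        izerginDet_eq_zero_of_not_injective_left α y fun h =>
          Fin.succ_ne_zero i (h (by simp))
      simp [eval_izerginCofactorPoly α (x i) x y (hxy i) (hxyα i), hzero, eval_prod,
        prod_eq_zero (mem_univ i)]
  · have hprod : (∏ i, (X - C (x i))).natDegree = n := by simp
    have hright : (C (izerginPrefactor α x y) * ((∏ i, (X - C (x i))) * P)).natDegree ≤ n + n :=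
      (natDegree_C_mul_le _ _).trans (natDegree_mul_le_of_le hprod.le hPdeg)
    have hleft := natDegree_izerginCofactorPoly_le α x y
    simp only [Fintype.card_sum, Fintype.card_fin]
    omega

theorem izerginDet_vecCons {α t : K} {x : Fin n → K} {y : Fin (n + 1) → K}
    (ht : ∀ j, t - y j ≠ 0) (htα : ∀ j, t - y j + α ≠ 0)
    (hxy : ∀ i j, x i - y j ≠ 0) (hxyα : ∀ i j, x i - y j + α ≠ 0)
    {Z : Fin (n + 1) → K}
    (hZ : ∀ j, izerginDet α x (y ∘ j.succAbove) =
      izerginPrefactor α x (y ∘ j.succAbove) * Z j)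
    {P : K[X]} (hPdeg : P.natDegree ≤ n)
    (hP : ∀ j, P.eval (y j) =
      α * (∏ k, (y j - y (j.succAbove k) + α)) * (∏ i, (x i - y j + α)) * Z j) :
    izerginDet α (vecCons t x) y = izerginPrefactor α (vecCons t x) y * P.eval t := by
  by_cases hcons : Function.Injective (vecCons t x)
  swap
  · rw [izerginDet_eq_zero_of_not_injective_left α y hcons,
      izerginPrefactor_eq_zero_of_not_injective_left α y hcons, zero_mul]
  by_cases hy : Function.Injective y
  swap
  · rw [izerginDet_eq_zero_of_not_injective_right α _ hy,
      izerginPrefactor_eq_zero_of_not_injective_right α _ hy, zero_mul]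
  have hx : Function.Injective x := hcons.comp (Fin.succ_injective n)
  have hprod : ∏ j, ((t - y j) * (t - y j + α)) ≠ 0 :=
    prod_ne_zero_iff.mpr fun j _ => mul_ne_zero (ht j) (htα j)
  refine mul_right_cancel₀ hprod ?_
  rw [← eval_izerginCofactorPoly α t x y ht htα, izerginCofactorPoly_eq hx hy hxy hxyα hZ hPdeg hP,
    izerginPrefactor_vecCons]
  simp only [eval_mul, eval_C, eval_prod, eval_sub, eval_X]
  field_simp

/-- The six-vertex weight of an alternating sign matrix `A`, equal to `α ^ (n ^ 2)` times the
weight `w_α(A)` of the paper, so that no division occurs. A zero entry has weight `xᵢ - yⱼ + α` or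
`xᵢ - yⱼ` according to whether the entries to its left and those above it have the same sum. -/
def asmWeight (α : R) (x y : Fin n → R) (A : Matrix (Fin n) (Fin n) ℤ) : R :=
  ∏ i, ∏ j,
    if A i j ≠ 0 then α
    else if ∑ k ∈ Iio j, A i k = ∑ k ∈ Iio i, A k j then x i - y j + α
    else x i - y j

/-- The partition function of the two `2 × 2` alternating sign matrices. -/
def asmSumTwo (α : R) (x y : Fin 2 → R) : R :=
  asmWeight α x y !![1, 0; 0, 1] + asmWeight α x y !![0, 1; 1, 0]

/-- The partition function of the seven `3 × 3` alternating sign matrices. -/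
def asmSumThree (α : R) (x y : Fin 3 → R) : R :=
  asmWeight α x y !![1, 0, 0; 0, 1, 0; 0, 0, 1] +
  asmWeight α x y !![1, 0, 0; 0, 0, 1; 0, 1, 0] +
  asmWeight α x y !![0, 1, 0; 1, 0, 0; 0, 0, 1] +
  asmWeight α x y !![0, 1, 0; 0, 0, 1; 1, 0, 0] +
  asmWeight α x y !![0, 0, 1; 0, 1, 0; 1, 0, 0] +
  asmWeight α x y !![0, 0, 1; 1, 0, 0; 0, 1, 0] +
  asmWeight α x y !![0, 1, 0; 1, -1, 1; 0, 1, 0]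

theorem asmSumTwo_eq (α : R) (x y : Fin 2 → R) :
    asmSumTwo α x y =
      α ^ 2 * ((x 0 - y 1) * (x 1 - y 0) + (x 0 - y 0 + α) * (x 1 - y 1 + α)) := by
  simp +decide only [asmSumTwo, asmWeight, Fin.prod_univ_two, if_true, if_false]
  ring

theorem asmSumThree_eq (α : R) (x y : Fin 3 → R) :
    asmSumThree α x y = α ^ 3 * (
      (x 0 - y 1) * (x 0 - y 2) * (x 1 - y 0) * (x 1 - y 2) * (x 2 - y 0) * (x 2 - y 1)
      + (x 0 - y 1) * (x 0 - y 2) * (x 1 - y 0) * (x 1 - y 1 + α) * (x 2 - y 0) *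
          (x 2 - y 2 + α)
      + (x 0 - y 0 + α) * (x 0 - y 2) * (x 1 - y 1 + α) * (x 1 - y 2) * (x 2 - y 0) *
          (x 2 - y 1)
      + (x 0 - y 0 + α) * (x 0 - y 2) * (x 1 - y 0 + α) * (x 1 - y 1) * (x 2 - y 1 + α) *
          (x 2 - y 2 + α)
      + (x 0 - y 0 + α) * (x 0 - y 1 + α) * (x 1 - y 0 + α) * (x 1 - y 2 + α) *
          (x 2 - y 1 + α) * (x 2 - y 2 + α)
      + (x 0 - y 0 + α) * (x 0 - y 1 + α) * (x 1 - y 1) * (x 1 - y 2 + α) * (x 2 - y 0) *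
          (x 2 - y 2 + α)
      + (x 0 - y 0 + α) * (x 0 - y 2) * (x 2 - y 0) * (x 2 - y 2 + α) * α ^ 2) := by
  simp +decide only [asmSumThree, asmWeight, Fin.prod_univ_three, if_true, if_false]
  ring

theorem asmSumTwo_vecCons_eq (α : R) (x : Fin 1 → R) (y : Fin 2 → R) (j : Fin 2) :
    asmSumTwo α (vecCons (y j) x) y =
      α * (∏ k, (y j - y (j.succAbove k) + α)) * (∏ i, (x i - y j + α)) * α := by
  rw [asmSumTwo_eq]
  fin_cases j <;>
    simp +decide only [Fin.prod_univ_one, Fin.succAbove, if_true, if_false, Fin.zero_eta,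
      Fin.mk_one, Fin.castSucc_zero, Fin.succ_zero_eq_one, Matrix.cons_val] <;>
    ring

theorem asmSumThree_vecCons_eq (α : R) (x : Fin 2 → R) (y : Fin 3 → R) (j : Fin 3) :
    asmSumThree α (vecCons (y j) x) y =
      α * (∏ k, (y j - y (j.succAbove k) + α)) * (∏ i, (x i - y j + α)) *
        asmSumTwo α x (y ∘ j.succAbove) := by
  rw [asmSumThree_eq, asmSumTwo_eq]
  fin_cases j <;>
    simp +decide only [Fin.prod_univ_two, Fin.succAbove, if_true, if_false, Fin.zero_eta,
      Fin.mk_one, Fin.reduceFinMk, Fin.castSucc_zero, Fin.castSucc_one, Fin.succ_zero_eq_one,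
      Fin.succ_one_eq_two, Function.comp_apply, Matrix.cons_val] <;>
    ring

theorem izerginDet_one (α : K) (x y : Fin 1 → K) :
    izerginDet α x y = izerginPrefactor α x y * α := by
  simp [izerginDet, izerginPrefactor, div_eq_mul_inv, mul_comm]

theorem izerginDet_two {α : K} {x y : Fin 2 → K}
    (hxy : ∀ i j, x i - y j ≠ 0) (hxyα : ∀ i j, x i - y j + α ≠ 0) :
    izerginDet α x y = izerginPrefactor α x y * asmSumTwo α x y := by
  let P : K[X] := asmSumTwo (C α) ![X, C (x 1)] (C ∘ y)
  have hPdeg : P.natDegree ≤ 1 := by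
    simp only [P, asmSumTwo_eq, Function.comp_apply, Matrix.cons_val]
    compute_degree
  have hPeval (t : K) : P.eval t = asmSumTwo α ![t, x 1] y := by
    simp [P, asmSumTwo_eq]
  have hx : x = ![x 0, x 1] := List.ofFn_inj.mp rfl
  have hdet := izerginDet_vecCons (x := ![x 1]) (hxy 0) (hxyα 0) (by simpa using hxy 1)
    (by simpa using hxyα 1) (fun j => izerginDet_one α _ _) hPdeg
    fun j => (hPeval (y j)).trans (asmSumTwo_vecCons_eq α _ y j)
  rwa [hPeval, ← hx] at hdet

theorem stmt8_general {α : K} {x y : Fin 3 → K}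
    (hxy : ∀ i j, x i - y j ≠ 0) (hxyα : ∀ i j, x i - y j + α ≠ 0) :
    izerginDet α x y = izerginPrefactor α x y * asmSumThree α x y := by
  let P : K[X] := asmSumThree (C α) ![X, C (x 1), C (x 2)] (C ∘ y)
  have hPdeg : P.natDegree ≤ 2 := by
    simp only [P, asmSumThree_eq, Function.comp_apply, Matrix.cons_val]
    compute_degree
  have hPeval (t : K) : P.eval t = asmSumThree α ![t, x 1, x 2] y := by
    simp [P, asmSumThree_eq]
  have hx : x = ![x 0, x 1, x 2] := List.ofFn_inj.mp rfl
  have hxy' : ∀ i j, ![x 1, x 2] i - y j ≠ 0 := Fin.forall_fin_two.mpr ⟨hxy 1, hxy 2⟩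
  have hxyα' : ∀ i j, ![x 1, x 2] i - y j + α ≠ 0 := Fin.forall_fin_two.mpr ⟨hxyα 1, hxyα 2⟩
  have hdet := izerginDet_vecCons (hxy 0) (hxyα 0) hxy' hxyα'
    (fun j => izerginDet_two (fun i _ => hxy' i _) fun i _ => hxyα' i _) hPdeg
    fun j => (hPeval (y j)).trans (asmSumThree_vecCons_eq α _ y j)
  rwa [hPeval, ← hx] at hdet

end Izergin

/-- The `n = 3` Jack limit of the Izergin–Korepin determinant: the determinant equals the
prefactor times the sum of the weights of the seven `3×3` alternating sign matrices. -/
theorem stmt8 {K : Type*} [Field K] [CharZero K] (x y : Fin 3 → K) (α : K) (hα : α ≠ 0)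
    (h1 : ∀ i j, x i - y j ≠ 0) (h2 : ∀ i j, x i - y j + α ≠ 0) :
    Matrix.det (Matrix.of fun i j : Fin 3 => α / ((x i - y j + α) * (x i - y j)))
      = α ^ 9 *
          ((x 0 - x 1) * (y 1 - y 0) * ((x 0 - x 2) * (y 2 - y 0)) *
            ((x 1 - x 2) * (y 2 - y 1))) /
          (∏ i, ∏ j, ((x i - y j) * (x i - y j + α)))
        * ((x 0 - y 1) * (x 0 - y 2) * (x 1 - y 0) * (x 1 - y 2) * (x 2 - y 0) *
              (x 2 - y 1) / α ^ 6
          + (x 0 - y 1) * (x 0 - y 2) * (x 1 - y 0) * (x 1 - y 1 + α) * (x 2 - y 0) *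
              (x 2 - y 2 + α) / α ^ 6
          + (x 0 - y 0 + α) * (x 0 - y 2) * (x 1 - y 1 + α) * (x 1 - y 2) * (x 2 - y 0) *
              (x 2 - y 1) / α ^ 6
          + (x 0 - y 0 + α) * (x 0 - y 2) * (x 1 - y 0 + α) * (x 1 - y 1) *
              (x 2 - y 1 + α) * (x 2 - y 2 + α) / α ^ 6
          + (x 0 - y 0 + α) * (x 0 - y 1 + α) * (x 1 - y 0 + α) * (x 1 - y 2 + α) *
              (x 2 - y 1 + α) * (x 2 - y 2 + α) / α ^ 6
          + (x 0 - y 0 + α) * (x 0 - y 1 + α) * (x 1 - y 1) * (x 1 - y 2 + α) *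
              (x 2 - y 0) * (x 2 - y 2 + α) / α ^ 6
          + (x 0 - y 0 + α) * (x 0 - y 2) * (x 2 - y 0) * (x 2 - y 2 + α) / α ^ 4) := by
  rw [← izerginDet, stmt8_general h1 h2, izerginPrefactor_three, asmSumThree_eq]
  field_simp
end

section
/- In the exterior-algebra setting of symmetric superpolynomials: the operators $e_n$ (multiplication by the $n$-th elementary symmetric function $e_n = \sum_{i_1 < \cdots < i_n} z_{i_1}\cdots z_{i_n}$), $\tilde e_{n-1}$ (multiplication by $\tilde e_{n-1} = \sum_{\sigma}' \theta_{\sigma(1)} z_{\sigma(2)}\cdots z_{\sigma(n)}$, the monomial $m_{(0;1^{n-1})}$), and $q^\perp = \sum_{i=1}^N z_i \partial_{\theta_i}$ satisfy the anticommutation relation $\{\tilde e_{n-1}, q^\perp\} = n\, e_n$ for all $n \geq 1$, as operators on polynomials in commuting variables $z_1,\dots,z_N$ and anticommuting variables $\theta_1,\dots,\theta_N$. -/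
set_option synthInstance.maxHeartbeats 1000000
set_option maxHeartbeats 1000000
open TensorProduct MvPolynomial Finset

noncomputable section

variable (N : ℕ)

abbrev SA := MvPolynomial (Fin N) ℚ ⊗[ℚ] ExteriorAlgebra ℚ (Fin N → ℚ)

/-- the anticommuting generator `θᵢ` -/
def theta (i : Fin N) : SA N := 1 ⊗ₜ ExteriorAlgebra.ι ℚ (Pi.single i 1)

/-- `∂/∂θᵢ`, the interior product with the `i`-th coordinate functional -/
def dtheta (i : Fin N) :
    ExteriorAlgebra ℚ (Fin N → ℚ) →ₗ[ℚ] ExteriorAlgebra ℚ (Fin N → ℚ) :=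
  CliffordAlgebra.contractLeft (LinearMap.proj i)

/-- `q^⊥ = Σ zᵢ ∂/∂θᵢ` -/
def qperp : SA N →ₗ[ℚ] SA N :=
  ∑ i : Fin N, (LinearMap.mulLeft ℚ ((X i : MvPolynomial (Fin N) ℚ) ⊗ₜ 1)).comp
    (TensorProduct.map LinearMap.id (dtheta N i))

/-- the elementary symmetric function `eₙ` as an element of the superalgebra -/
def esup (n : ℕ) : SA N := (esymm (Fin N) ℚ n) ⊗ₜ 1

/-- `ẽₖ = Σ_j θ_j Σ_{i₁<…<i_k, i_ℓ ≠ j} z_{i₁}⋯z_{i_k}` -/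
def etilde (k : ℕ) : SA N :=
  ∑ j : Fin N, ∑ S ∈ (univ.erase j).powersetCard k,
    (∏ i ∈ S, X i : MvPolynomial (Fin N) ℚ) ⊗ₜ ExteriorAlgebra.ι ℚ (Pi.single j 1)

end

/-!
In the language of differential forms in the `zᵢ`, with `θᵢ` playing the role of `dzᵢ`, the element
`ẽ_{n-1}` is the differential `d eₙ = Σ θⱼ ∂eₙ/∂zⱼ`, and `q^⊥` is the contraction with the Euler
vector field `Σ zᵢ ∂/∂zᵢ`. A contraction anticommutes with exterior multiplication by a one-form up
to the pairing of the two, so the anticommutator is multiplication by `Σ zⱼ ∂eₙ/∂zⱼ`, which is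
`n eₙ` by Euler's identity. The same argument applies to every homogeneous polynomial.
-/

section ElementarySymmetric

theorem notMem_of_mem_powersetCard_of_notMem {α : Type*} {a : α} {s T : Finset α} {k : ℕ}
    (hT : T ∈ s.powersetCard k) (ha : a ∉ s) : a ∉ T :=
  notMem_mono (mem_powersetCard.1 hT).1 ha

theorem sum_powersetCard_succ_insert {α β : Type*} [DecidableEq α] [AddCommMonoid β] {a : α}
    {s : Finset α} (ha : a ∉ s) (k : ℕ) (f : Finset α → β) :
    ∑ T ∈ (insert a s).powersetCard (k + 1), f T
      = ∑ T ∈ s.powersetCard (k + 1), f T + ∑ T ∈ s.powersetCard k, f (insert a T) := by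
  have notMem {T : Finset α} {m : ℕ} (hT : T ∈ s.powersetCard m) : a ∉ T :=
    notMem_of_mem_powersetCard_of_notMem hT ha
  rw [powersetCard_succ_insert ha, sum_union, sum_image]
  · intro T hT U hU hTU
    rw [← erase_insert (notMem hT), hTU, erase_insert (notMem hU)]
  · refine disjoint_left.2 fun T hT hT' => ?_
    obtain ⟨U, -, rfl⟩ := mem_image.1 hT'
    exact notMem hT (mem_insert_self a U)

variable {σ R : Type*} [CommSemiring R]

theorem isHomogeneous_prod_X (S : Finset σ) :
    (∏ i ∈ S, X i : MvPolynomial σ R).IsHomogeneous #S :=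
  card_eq_sum_ones S ▸ IsHomogeneous.prod S X (fun _ => 1) fun i _ => isHomogeneous_X R i

theorem isHomogeneous_esymm [Fintype σ] (n : ℕ) : (esymm σ R n).IsHomogeneous n :=
  IsHomogeneous.sum _ _ _ fun S hS => (mem_powersetCard_univ.1 hS) ▸ isHomogeneous_prod_X S

theorem pderiv_prod_X_of_notMem {j : σ} {S : Finset σ} (hj : j ∉ S) :
    pderiv j (∏ i ∈ S, X i : MvPolynomial σ R) = 0 :=
  prod_induction _ (pderiv j · = 0)
    (fun p q hp hq => by simp only [pderiv_mul, hp, hq, zero_mul, mul_zero, add_zero])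
    pderiv_one fun _ hi => pderiv_X_of_ne (ne_of_mem_of_not_mem hi hj)

theorem pderiv_esymm_succ [Fintype σ] [DecidableEq σ] (j : σ) (k : ℕ) :
    pderiv j (esymm σ R (k + 1)) = ∑ S ∈ (univ.erase j).powersetCard k, ∏ i ∈ S, X i := by
  have notMem {S : Finset σ} {m : ℕ} (hS : S ∈ (univ.erase j).powersetCard m) : j ∉ S :=
    notMem_of_mem_powersetCard_of_notMem hS (notMem_erase j univ)
  rw [esymm]
  nth_rw 1 [← insert_erase (mem_univ j)]
  rw [sum_powersetCard_succ_insert (notMem_erase j univ), map_add, map_sum, map_sum,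
    sum_eq_zero fun S hS => pderiv_prod_X_of_notMem (notMem hS), zero_add]
  refine sum_congr rfl fun S hS => ?_
  rw [prod_insert (notMem hS), pderiv_mul, pderiv_X_self, pderiv_prod_X_of_notMem (notMem hS),
    one_mul, mul_zero, add_zero]

end ElementarySymmetric

section Contraction

variable {R A M : Type*} [CommRing R] [Ring A] [Algebra R A] [AddCommGroup M] [Module R M]
  {Q : QuadraticForm R M}

theorem lTensor_contractLeft_tmul_ι_mul (d : Module.Dual R M) (a : A) (m : M)
    (x : A ⊗[R] CliffordAlgebra Q) :
    (CliffordAlgebra.contractLeft d).lTensor A ((a ⊗ₜ CliffordAlgebra.ι Q m) * x)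
      = ((d m • a) ⊗ₜ 1) * x
        - (a ⊗ₜ CliffordAlgebra.ι Q m) * (CliffordAlgebra.contractLeft d).lTensor A x := by
  induction x with
  | zero => simp only [mul_zero, map_zero, sub_zero]
  | add x y hx hy => simp only [mul_add, map_add, hx, hy, add_sub_add_comm]
  | tmul b w =>
    simp only [Algebra.TensorProduct.tmul_mul_tmul, LinearMap.lTensor_tmul,
      CliffordAlgebra.contractLeft_ι_mul, tmul_sub, tmul_smul, smul_tmul', smul_mul_assoc, one_mul]

end Contraction

section EulerField

variable (σ R : Type*) [Fintype σ] [CommRing R]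

/-- Contraction of polynomial differential forms with the Euler vector field `Σ zᵢ ∂/∂zᵢ`, where
the one-form `dzᵢ` is the `i`-th basis vector of `σ → R`. -/
noncomputable def eulerContraction :
    MvPolynomial σ R ⊗[R] ExteriorAlgebra R (σ → R) →ₗ[R]
      MvPolynomial σ R ⊗[R] ExteriorAlgebra R (σ → R) :=
  ∑ i, (LinearMap.mulLeft R ((X i : MvPolynomial σ R) ⊗ₜ 1)).comp
    ((CliffordAlgebra.contractLeft (LinearMap.proj i)).lTensor (MvPolynomial σ R))

variable {σ R}

theorem eulerContraction_apply (x : MvPolynomial σ R ⊗[R] ExteriorAlgebra R (σ → R)) :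
    eulerContraction σ R x = ∑ i, ((X i : MvPolynomial σ R) ⊗ₜ 1)
      * (CliffordAlgebra.contractLeft (LinearMap.proj i)).lTensor (MvPolynomial σ R) x := by
  simp only [eulerContraction, LinearMap.sum_apply, LinearMap.comp_apply, LinearMap.mulLeft_apply]

theorem tmul_ι_mul_eulerContraction_add (f : MvPolynomial σ R) (v : σ → R)
    (x : MvPolynomial σ R ⊗[R] ExteriorAlgebra R (σ → R)) :
    (f ⊗ₜ ExteriorAlgebra.ι R v) * eulerContraction σ R x
        + eulerContraction σ R ((f ⊗ₜ ExteriorAlgebra.ι R v) * x)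
      = ((∑ i, v i • (X i * f)) ⊗ₜ 1) * x := by
  rw [eulerContraction_apply, eulerContraction_apply, mul_sum, ← sum_add_distrib, sum_tmul, sum_mul]
  refine sum_congr rfl fun i _ => ?_
  rw [lTensor_contractLeft_tmul_ι_mul, mul_sub, ← mul_assoc, ← mul_assoc, ← mul_assoc]
  simp only [Algebra.TensorProduct.tmul_mul_tmul, mul_one, one_mul, mul_comm f, add_sub_cancel,
    LinearMap.proj_apply, mul_smul_comm]

variable [DecidableEq σ]

/-- The differential `dp = Σ ∂p/∂zⱼ dzⱼ` of a polynomial, as a one-form with polynomial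
coefficients; `dzⱼ` is the `j`-th basis vector of `σ → R`. -/
noncomputable def polynomialDifferential (p : MvPolynomial σ R) :
    MvPolynomial σ R ⊗[R] ExteriorAlgebra R (σ → R) :=
  ∑ j, pderiv j p ⊗ₜ ExteriorAlgebra.ι R (Pi.single j 1)

theorem polynomialDifferential_mul_eulerContraction_add (p : MvPolynomial σ R)
    (x : MvPolynomial σ R ⊗[R] ExteriorAlgebra R (σ → R)) :
    polynomialDifferential p * eulerContraction σ R x
        + eulerContraction σ R (polynomialDifferential p * x)
      = ((∑ i, X i * pderiv i p) ⊗ₜ 1) * x := by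
  simp only [polynomialDifferential, sum_mul, map_sum, ← sum_add_distrib,
    tmul_ι_mul_eulerContraction_add, Pi.single_apply, ite_smul, one_smul, zero_smul,
    sum_ite_eq', mem_univ, if_true, sum_tmul]

theorem stmt9_general {p : MvPolynomial σ R} {n : ℕ} (hp : p.IsHomogeneous n) :
    (LinearMap.mulLeft R (polynomialDifferential p)).comp (eulerContraction σ R)
      + (eulerContraction σ R).comp (LinearMap.mulLeft R (polynomialDifferential p))
    = (n : R) • LinearMap.mulLeft R (p ⊗ₜ 1) := by
  refine LinearMap.ext fun x => ?_
  simp only [LinearMap.add_apply, LinearMap.comp_apply, LinearMap.smul_apply,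
    LinearMap.mulLeft_apply, polynomialDifferential_mul_eulerContraction_add,
    hp.sum_X_mul_pderiv, Nat.cast_smul_eq_nsmul, ← smul_tmul', smul_mul_assoc]

end EulerField

theorem qperp_eq_eulerContraction (N : ℕ) : qperp N = eulerContraction (Fin N) ℚ :=
  rfl

theorem etilde_eq_polynomialDifferential_esymm (N k : ℕ) :
    etilde N k = polynomialDifferential (esymm (Fin N) ℚ (k + 1)) := by
  simp only [etilde, polynomialDifferential, pderiv_esymm_succ, sum_tmul]

/-- The anticommutation relation `{ẽ_{n-1}, q^⊥} = n eₙ` (equation (3.20) of the paper). -/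
theorem stmt9 (N n : ℕ) (hn : 1 ≤ n) (hN : n ≤ N) :
    (LinearMap.mulLeft ℚ (etilde N (n - 1))).comp (qperp N)
      + (qperp N).comp (LinearMap.mulLeft ℚ (etilde N (n - 1)))
    = (n : ℚ) • LinearMap.mulLeft ℚ (esup N n) := by
  rw [etilde_eq_polynomialDifferential_esymm, Nat.sub_add_cancel hn, qperp_eq_eulerContraction]
  exact stmt9_general (isHomogeneous_esymm n)
end
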